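/- Closure of word languages under grounded hypotheses: let H be a grounded set of hypotheses. Then (i) for every L ⊆ Σ*, cl_H(L) = cl_H^seq(L); and (ii) for all L, L' ⊆ SP, cl_H(L ∥ L') = cl_H(L) ∥ cl_H(L'). -/

import Mathlib

namespace CKAH

open Classical

/-! ### Labelled posets and pomsets -/

/-- A labelled poset over alphabet `A`: a finite carrier with a partial order and labelling. -/
structure LPoset (A : Type) : Type 1 where
  carrier : Type
  [fin : Fintype carrier]
  [ord : PartialOrder carrier]
  lab : carrier → A

attribute [instance] LPoset.fin LPoset.ord

/-- Isomorphism of labelled posets: an order isomorphism preserving labels. -/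
def LPoset.Iso {A : Type} (u v : LPoset A) : Prop :=
  ∃ e : u.carrier ≃o v.carrier, ∀ x, v.lab (e x) = u.lab x

theorem LPoset.iso_equivalence (A : Type) : Equivalence (LPoset.Iso (A := A)) where
  refl u := ⟨OrderIso.refl _, fun _ => rfl⟩
  symm := by
    rintro u v ⟨e, he⟩
    exact ⟨e.symm, fun x => by rw [← he (e.symm x), OrderIso.apply_symm_apply]⟩
  trans := by
    rintro u v w ⟨e, he⟩ ⟨f, hf⟩
    exact ⟨e.trans f, fun x => by rw [OrderIso.trans_apply, hf, he]⟩

instance pomSetoid (A : Type) : Setoid (LPoset A) := ⟨LPoset.Iso, LPoset.iso_equivalence A⟩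

/-- A pomset is an isomorphism class of labelled posets. -/
def Pomset (A : Type) : Type 1 := Quotient (pomSetoid A)

/-- Sequential composition of labelled posets: disjoint union, everything on the left
below everything on the right (lexicographic sum order). -/
def LPoset.seqL {A : Type} (u v : LPoset A) : LPoset A where
  carrier := u.carrier ⊕ₗ v.carrier
  fin := inferInstanceAs (Fintype (u.carrier ⊕ v.carrier))
  lab := fun x => Sum.elim u.lab v.lab (ofLex x)

/-- Parallel composition of labelled posets: disjoint union with no cross ordering. -/
def LPoset.parL {A : Type} (u v : LPoset A) : LPoset A where
  carrier := u.carrier ⊕ v.carrier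
  lab := Sum.elim u.lab v.lab

def Pomset.seq {A : Type} : Pomset A → Pomset A → Pomset A :=
  Quotient.map₂ LPoset.seqL (by
    rintro u₁ u₂ ⟨e, he⟩ v₁ v₂ ⟨f, hf⟩
    refine ⟨(RelIso.sumLexCongr e f :
      (u₁.carrier ⊕ₗ v₁.carrier) ≃o (u₂.carrier ⊕ₗ v₂.carrier)), ?_⟩
    rintro (x | x)
    · exact he x
    · exact hf x)

/-- Order isomorphism between disjoint-union orders, from component isomorphisms. -/
def sumOrderIso {α β γ δ : Type} [PartialOrder α] [PartialOrder β] [PartialOrder γ]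
    [PartialOrder δ] (e : α ≃o γ) (f : β ≃o δ) : (α ⊕ β) ≃o (γ ⊕ δ) where
  toEquiv := Equiv.sumCongr e.toEquiv f.toEquiv
  map_rel_iff' := by
    rintro (x | x) (y | y) <;> simp [Sum.le_def, e.le_iff_le, f.le_iff_le]

def Pomset.par {A : Type} : Pomset A → Pomset A → Pomset A :=
  Quotient.map₂ LPoset.parL (by
    rintro u₁ u₂ ⟨e, he⟩ v₁ v₂ ⟨f, hf⟩
    refine ⟨sumOrderIso e f, ?_⟩
    rintro (x | x)
    · exact he x
    · exact hf x)

def LPoset.emptyL (A : Type) : LPoset A := { carrier := Fin 0, lab := fun x => x.elim0 }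

def LPoset.singleL {A : Type} (a : A) : LPoset A := { carrier := PUnit, lab := fun _ => a }

/-- The empty pomset `1`. -/
def Pomset.empty (A : Type) : Pomset A := ⟦LPoset.emptyL A⟧

/-- The single-letter pomset. -/
def Pomset.single {A : Type} (a : A) : Pomset A := ⟦LPoset.singleL a⟧

/-- Subsumption on labelled posets: `u ⊑ v` iff there is a label-preserving
order-preserving bijection from the carrier of `v` to that of `u`. -/
def LPoset.subL {A : Type} (u v : LPoset A) : Prop :=
  ∃ h : v.carrier ≃ u.carrier,
    (∀ x, u.lab (h x) = v.lab x) ∧ ∀ x y : v.carrier, x ≤ y → h x ≤ h y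

/-- Subsumption of pomsets: `Pomset.sub U V` means `U ⊑ V`. -/
def Pomset.sub {A : Type} : Pomset A → Pomset A → Prop :=
  Quotient.lift₂ LPoset.subL (by
    rintro u₁ v₁ u₂ v₂ ⟨e, he⟩ ⟨f, hf⟩
    refine propext ⟨?_, ?_⟩
    · rintro ⟨h, hl, hm⟩
      refine ⟨(f.toEquiv.symm.trans h).trans e.toEquiv, fun x => ?_, fun x y hxy => ?_⟩
      · show u₂.lab (e (h (f.symm x))) = v₂.lab x
        rw [he, hl, ← hf (f.symm x), OrderIso.apply_symm_apply]
      · simp only [Equiv.trans_apply]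
        exact e.le_iff_le.mpr (hm _ _ (f.symm.le_iff_le.mpr hxy))
    · rintro ⟨h, hl, hm⟩
      refine ⟨(f.toEquiv.trans h).trans e.toEquiv.symm, fun x => ?_, fun x y hxy => ?_⟩
      · show u₁.lab (e.symm (h (f x))) = v₁.lab x
        rw [← he (e.symm (h (f x))), OrderIso.apply_symm_apply, hl, hf]
      · simp only [Equiv.trans_apply]
        exact e.symm.le_iff_le.mpr (hm _ _ (f.le_iff_le.mpr hxy)))

def LPoset.isWordL {A : Type} (u : LPoset A) : Prop := ∀ x y : u.carrier, x ≤ y ∨ y ≤ x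

/-- A pomset is a word when it is totally ordered. -/
def Pomset.IsWord {A : Type} : Pomset A → Prop :=
  Quotient.lift LPoset.isWordL (by
    rintro u v ⟨e, -⟩
    refine propext ⟨fun h x y => ?_, fun h x y => ?_⟩
    · rcases h (e.symm x) (e.symm y) with h' | h'
      · exact Or.inl (e.symm.le_iff_le.mp h')
      · exact Or.inr (e.symm.le_iff_le.mp h')
    · rcases h (e x) (e y) with h' | h'
      · exact Or.inl (e.le_iff_le.mp h')
      · exact Or.inr (e.le_iff_le.mp h'))

def LPoset.mapL {A B : Type} (f : A → B) (u : LPoset A) : LPoset B :=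
  { carrier := u.carrier, lab := f ∘ u.lab }

/-- Relabelling of pomsets along a function on letters. -/
def Pomset.map {A B : Type} (f : A → B) : Pomset A → Pomset B :=
  Quotient.map (LPoset.mapL f)
    (by rintro u v ⟨e, he⟩; exact ⟨e, fun x => congrArg f (he x)⟩)

def LPoset.overL {A : Type} (Γ : Set A) (u : LPoset A) : Prop := ∀ x, u.lab x ∈ Γ

/-- All labels of the pomset belong to `Γ`. -/
def Pomset.Over {A : Type} (Γ : Set A) : Pomset A → Prop :=
  Quotient.lift (LPoset.overL Γ) (by
    rintro u v ⟨e, he⟩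
    refine propext ⟨fun h x => ?_, fun h x => ?_⟩
    · have h2 := he (e.symm x)
      rw [OrderIso.apply_symm_apply] at h2
      rw [h2]; exact h _
    · rw [← he x]; exact h _)

/-- Series-parallel pomsets. -/
inductive Pomset.IsSP {A : Type} : Pomset A → Prop
  | empty : Pomset.IsSP (Pomset.empty A)
  | single (a : A) : Pomset.IsSP (Pomset.single a)
  | seq {U V : Pomset A} : Pomset.IsSP U → Pomset.IsSP V → Pomset.IsSP (Pomset.seq U V)
  | par {U V : Pomset A} : Pomset.IsSP U → Pomset.IsSP V → Pomset.IsSP (Pomset.par U V)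

def SPset (A : Type) : Set (Pomset A) := {U | U.IsSP}

/-! ### Pomset contexts -/

/-- Contexts are pomsets over `Option A`, where `none` plays the role of `*`.
`uniqueStarL` says there is exactly one `*`-labelled node. -/
def LPoset.uniqueStarL {A : Type} (c : LPoset (Option A)) : Prop := ∃! x, c.lab x = none

theorem LPoset.uniqueStarL_congr {A : Type} {u v : LPoset (Option A)}
    (e : u.carrier ≃o v.carrier) (he : ∀ x, v.lab (e x) = u.lab x) :
    u.uniqueStarL ↔ v.uniqueStarL := by
  constructor
  · rintro ⟨x, hx, hux⟩
    refine ⟨e x, show v.lab (e x) = none by rw [he]; exact hx, fun y hy => ?_⟩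
    have h2 := he (e.symm y)
    rw [OrderIso.apply_symm_apply] at h2
    have h3 : e.symm y = x := hux _ (h2.symm.trans hy)
    rw [← h3, OrderIso.apply_symm_apply]
  · rintro ⟨x, hx, hvx⟩
    refine ⟨e.symm x, ?_, fun y hy => ?_⟩
    · show u.lab (e.symm x) = none
      have h2 := he (e.symm x)
      rw [OrderIso.apply_symm_apply] at h2
      rw [← h2]; exact hx
    · have h3 : e y = x := hvx _ (show v.lab (e y) = none by rw [he]; exact hy)
      rw [← h3, OrderIso.symm_apply_apply]

/-- A pomset context: exactly one node labelled `*`. -/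
def Pomset.IsCtx {A : Type} : Pomset (Option A) → Prop :=
  Quotient.lift LPoset.uniqueStarL
    (fun _ _ h => propext (LPoset.uniqueStarL_congr h.choose h.choose_spec))

/-- Series-parallel pomset contexts. -/
def Pomset.IsSPCtx {A : Type} (C : Pomset (Option A)) : Prop := C.IsCtx ∧ C.IsSP

/-- Sequential (totally ordered) pomset contexts. -/
def Pomset.IsSeqCtx {A : Type} (C : Pomset (Option A)) : Prop := C.IsCtx ∧ C.IsWord

/-- The trivial context `*`. -/
def starCtx (A : Type) : Pomset (Option A) := Pomset.single (none : Option A)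

theorem option_get_eq_get {α : Type} {o₁ o₂ : Option α} (h : o₁ = o₂) (h₁ : o₁.isSome)
    (h₂ : o₂.isSome) : o₁.get h₁ = o₂.get h₂ := by subst h; rfl

/-- The order of `C[U]`: the orders of `C` (restricted away from `*`) and of `U`, with a
point of `C` below (resp. above) all of `U` when it is below (resp. above) the unique
`*`-node of `C`.  (For well-definedness of the order, the cross-relations are guarded by
the requirement that the star node is unique, which holds for every genuine context.) -/
def LPoset.insLe {A : Type} (c : LPoset (Option A)) (u : LPoset A) :
    ({x : c.carrier // c.lab x ≠ none} ⊕ u.carrier) →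
    ({x : c.carrier // c.lab x ≠ none} ⊕ u.carrier) → Prop
  | Sum.inl x, Sum.inl y => x.val ≤ y.val
  | Sum.inr x, Sum.inr y => x ≤ y
  | Sum.inl x, Sum.inr _ => c.uniqueStarL ∧ ∃ s, c.lab s = none ∧ x.val ≤ s
  | Sum.inr _, Sum.inl y => c.uniqueStarL ∧ ∃ s, c.lab s = none ∧ s ≤ y.val

/-- Insertion of a labelled poset `u` into the gap of a context `c`: the `*`-labelled
node is removed and `u` is put in its place, inheriting the order relations of `*`. -/
noncomputable def LPoset.insL {A : Type} (c : LPoset (Option A)) (u : LPoset A) :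
    LPoset A where
  carrier := {x : c.carrier // c.lab x ≠ none} ⊕ u.carrier
  fin := by classical exact inferInstance
  ord :=
    { le := LPoset.insLe c u
      lt := fun p q => LPoset.insLe c u p q ∧ ¬ LPoset.insLe c u q p
      lt_iff_le_not_ge := fun _ _ => Iff.rfl
      le_refl := by rintro (x | x) <;> exact le_refl _
      le_trans := by
        rintro (x | x) (y | y) (z | z) h1 h2
        · exact le_trans h1 h2
        · obtain ⟨hu, s, hs, hys⟩ := h2
          exact ⟨hu, s, hs, le_trans h1 hys⟩
        · obtain ⟨hu, s, hs, hxs⟩ := h1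
          obtain ⟨-, t, ht, htz⟩ := h2
          obtain ⟨w, hw, huniq⟩ := hu
          have hst : s = t := (huniq s hs).trans (huniq t ht).symm
          exact le_trans (hst ▸ hxs) htz
        · exact h1
        · obtain ⟨hu, s, hs, hsy⟩ := h1
          exact ⟨hu, s, hs, le_trans hsy h2⟩
        · obtain ⟨hu, s, hs, hsy⟩ := h1
          obtain ⟨-, t, ht, hyt⟩ := h2
          obtain ⟨w, hw, huniq⟩ := hu
          have hst : s = t := (huniq s hs).trans (huniq t ht).symm
          have hy : y.val = s := le_antisymm (hst.symm ▸ hyt) hsy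
          exact absurd (hy.symm ▸ hs) y.prop
        · exact h2
        · exact le_trans h1 h2
      le_antisymm := by
        rintro (x | x) (y | y) h1 h2
        · exact congrArg Sum.inl (Subtype.ext (le_antisymm h1 h2))
        · obtain ⟨hu, s, hs, hxs⟩ := h1
          obtain ⟨-, t, ht, htx⟩ := h2
          obtain ⟨w, hw, huniq⟩ := hu
          have hst : s = t := (huniq s hs).trans (huniq t ht).symm
          have hx : x.val = s := le_antisymm hxs (hst.symm ▸ htx)
          exact absurd (hx.symm ▸ hs) x.prop
        · obtain ⟨hu, s, hs, hsy⟩ := h1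
          obtain ⟨-, t, ht, hyt⟩ := h2
          obtain ⟨w, hw, huniq⟩ := hu
          have hst : s = t := (huniq s hs).trans (huniq t ht).symm
          have hy : y.val = s := le_antisymm (hst.symm ▸ hyt) hsy
          exact absurd (hy.symm ▸ hs) y.prop
        · exact congrArg Sum.inr (le_antisymm h1 h2) }
  lab := Sum.elim (fun x => (c.lab x.val).get (Option.isSome_iff_ne_none.mpr x.prop)) u.lab

/-- `Pomset.ins C U` is `C[U]`: plugging the pomset `U` into the gap of the context `C`. -/
noncomputable def Pomset.ins {A : Type} : Pomset (Option A) → Pomset A → Pomset A :=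
  Quotient.map₂ LPoset.insL (by
    rintro c₁ c₂ ⟨e, he⟩ u₁ u₂ ⟨f, hf⟩
    have hstar : c₁.uniqueStarL ↔ c₂.uniqueStarL := LPoset.uniqueStarL_congr e he
    refine ⟨{ toEquiv := Equiv.sumCongr
                (e.toEquiv.subtypeEquiv fun x => by
                  rw [show c₂.lab (e.toEquiv x) = c₁.lab x from he x]) f.toEquiv
              map_rel_iff' := ?_ }, ?_⟩
    · rintro (x | x) (y | y)
      · exact e.le_iff_le
      · show (c₂.uniqueStarL ∧ ∃ s, c₂.lab s = none ∧ (e x.val : c₂.carrier) ≤ s) ↔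
             (c₁.uniqueStarL ∧ ∃ s, c₁.lab s = none ∧ x.val ≤ s)
        constructor
        · rintro ⟨hu, s, hs, hxs⟩
          refine ⟨hstar.mpr hu, e.symm s, ?_, ?_⟩
          · have h2 := he (e.symm s)
            rw [OrderIso.apply_symm_apply] at h2
            rw [← h2]; exact hs
          · exact e.le_iff_le.mp (by rw [OrderIso.apply_symm_apply]; exact hxs)
        · rintro ⟨hu, s, hs, hxs⟩
          exact ⟨hstar.mp hu, e s, by rw [he]; exact hs, e.le_iff_le.mpr hxs⟩
      · show (c₂.uniqueStarL ∧ ∃ s, c₂.lab s = none ∧ s ≤ (e y.val : c₂.carrier)) ↔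
             (c₁.uniqueStarL ∧ ∃ s, c₁.lab s = none ∧ s ≤ y.val)
        constructor
        · rintro ⟨hu, s, hs, hsy⟩
          refine ⟨hstar.mpr hu, e.symm s, ?_, ?_⟩
          · have h2 := he (e.symm s)
            rw [OrderIso.apply_symm_apply] at h2
            rw [← h2]; exact hs
          · exact e.le_iff_le.mp (by rw [OrderIso.apply_symm_apply]; exact hsy)
        · rintro ⟨hu, s, hs, hsy⟩
          exact ⟨hstar.mp hu, e s, by rw [he]; exact hs, e.le_iff_le.mpr hsy⟩
      · exact f.le_iff_le
    · rintro (x | x)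
      · exact option_get_eq_get (he x.val) _ _
      · exact hf x)

/-! ### Pomset languages -/

abbrev Lang (A : Type) := Set (Pomset A)

def Lang.seq {A : Type} (L K : Lang A) : Lang A :=
  {W | ∃ U ∈ L, ∃ V ∈ K, W = Pomset.seq U V}

def Lang.par {A : Type} (L K : Lang A) : Lang A :=
  {W | ∃ U ∈ L, ∃ V ∈ K, W = Pomset.par U V}

def Lang.pow {A : Type} (L : Lang A) : ℕ → Lang A
  | 0 => {Pomset.empty A}
  | n + 1 => Lang.seq (Lang.pow L n) L

def Lang.star {A : Type} (L : Lang A) : Lang A := ⋃ n, L.pow n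

/-- Application of a context to a language: `C[L] = {C[U] : U ∈ L}`. -/
def Ctx.img {A : Type} (C : Pomset (Option A)) (L : Lang A) : Lang A :=
  {W | ∃ U ∈ L, W = C.ins U}

/-! ### CKA terms and semantics -/

inductive Term (A : Type) : Type
  | zero : Term A
  | one : Term A
  | var : A → Term A
  | add : Term A → Term A → Term A
  | seq : Term A → Term A → Term A
  | par : Term A → Term A → Term A
  | star : Term A → Term A

/-- Pomset language semantics of CKA terms. -/
def Term.lang {A : Type} : Term A → Lang A
  | .zero => ∅
  | .one => {Pomset.empty A}
  | .var a => {Pomset.single a}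
  | .add e f => e.lang ∪ f.lang
  | .seq e f => Lang.seq e.lang f.lang
  | .par e f => Lang.par e.lang f.lang
  | .star e => Lang.star e.lang

/-- Sets of hypotheses: a hypothesis `e ≤ f` is the pair `(e, f)`. -/
abbrev HypSet (A : Type) := Set (Term A × Term A)

/-- The congruence `≡^H` on CKA terms generated by the CKA axioms and the hypotheses `H`
(the constructor `hyp` encodes `e ≦^H f`, i.e. `e + f ≡^H f`, for `e ≤ f ∈ H`). -/
inductive CongH {A : Type} (H : HypSet A) : Term A → Term A → Prop
  | refl (e) : CongH H e e
  | symm {e f} : CongH H e f → CongH H f e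
  | trans {e f g} : CongH H e f → CongH H f g → CongH H e g
  | addCong {e e' f f'} : CongH H e e' → CongH H f f' → CongH H (.add e f) (.add e' f')
  | seqCong {e e' f f'} : CongH H e e' → CongH H f f' → CongH H (.seq e f) (.seq e' f')
  | parCong {e e' f f'} : CongH H e e' → CongH H f f' → CongH H (.par e f) (.par e' f')
  | starCong {e e'} : CongH H e e' → CongH H (.star e) (.star e')
  | addZero (e) : CongH H (.add e .zero) e
  | addIdem (e) : CongH H (.add e e) e
  | addComm (e f) : CongH H (.add e f) (.add f e)
  | addAssoc (e f g) : CongH H (.add e (.add f g)) (.add (.add e f) g)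
  | seqAssoc (e f g) : CongH H (.seq e (.seq f g)) (.seq (.seq e f) g)
  | seqDistL (e f g) : CongH H (.seq e (.add f g)) (.add (.seq e f) (.seq e g))
  | seqDistR (e f g) : CongH H (.seq (.add e f) g) (.add (.seq e g) (.seq f g))
  | seqOneR (e) : CongH H (.seq e .one) e
  | seqOneL (e) : CongH H (.seq .one e) e
  | seqZeroR (e) : CongH H (.seq e .zero) .zero
  | seqZeroL (e) : CongH H (.seq .zero e) .zero
  | parComm (e f) : CongH H (.par e f) (.par f e)
  | parOne (e) : CongH H (.par e .one) e
  | parZero (e) : CongH H (.par e .zero) .zero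
  | parAssoc (e f g) : CongH H (.par e (.par f g)) (.par (.par e f) g)
  | parDist (e f g) : CongH H (.par e (.add f g)) (.add (.par e f) (.par e g))
  | starUnfoldL (e) : CongH H (.add .one (.seq e (.star e))) (.star e)
  | starUnfoldR (e) : CongH H (.add .one (.seq (.star e) e)) (.star e)
  | lfpL {e f g} : CongH H (.add (.add e (.seq f g)) g) g →
      CongH H (.add (.seq (.star f) e) g) g
  | lfpR {e f g} : CongH H (.add (.add e (.seq f g)) f) f →
      CongH H (.add (.seq e (.star g)) f) f
  | hyp {e f} : (e, f) ∈ H → CongH H (.add e f) f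

/-- `e ≦^H f`, the natural order `e + f ≡^H f`. -/
def LeH {A : Type} (H : HypSet A) (e f : Term A) : Prop := CongH H (.add e f) f

/-- The `H`-closure of a pomset language, as an inductive predicate: the smallest language
containing `L` such that for all `e ≤ f ∈ H` and series-parallel contexts `C`,
if `C[⟦f⟧] ⊆ cl` then `C[⟦e⟧] ⊆ cl`. -/
inductive closure {A : Type} (H : HypSet A) (L : Lang A) : Pomset A → Prop
  | base {U} : U ∈ L → closure H L U
  | step {e f : Term A} (hef : (e, f) ∈ H) {C : Pomset (Option A)} (hC : C.IsSPCtx)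
      (hf : ∀ V ∈ f.lang, closure H L (C.ins V)) {U} (hU : U ∈ e.lang) :
      closure H L (C.ins U)

/-- `cl H L` is the `H`-closure of `L`. -/
def cl {A : Type} (H : HypSet A) (L : Lang A) : Lang A := {U | closure H L U}

/-- The sequential closure: like `cl` but only sequential contexts are used. -/
inductive seqClosure {A : Type} (H : HypSet A) (L : Lang A) : Pomset A → Prop
  | base {U} : U ∈ L → seqClosure H L U
  | step {e f : Term A} (hef : (e, f) ∈ H) {C : Pomset (Option A)} (hC : C.IsSeqCtx)
      (hf : ∀ V ∈ f.lang, seqClosure H L (C.ins V)) {U} (hU : U ∈ e.lang) :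
      seqClosure H L (C.ins U)

def seqCl {A : Type} (H : HypSet A) (L : Lang A) : Lang A := {U | seqClosure H L U}

/-! ### Implication, completeness, reductions -/

/-- `H` implies `H'`: every hypothesis of `H'` is derivable from `H`. -/
def Implies {A : Type} (H H' : HypSet A) : Prop := ∀ p ∈ H', LeH H p.1 p.2

/-- `H` is complete: semantic equivalence implies axiomatic equivalence. -/
def Complete {A : Type} (H : HypSet A) : Prop :=
  ∀ e f : Term A, cl H e.lang = cl H f.lang → CongH H e f

/-- A reduction from `H` to `H'` (presupposing that `H` implies `H'`). -/
structure IsReduction {A : Type} (H H' : HypSet A) (r : Term A → Term A) : Prop where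
  implies : Implies H H'
  equiv : ∀ e, CongH H e (r e)
  reflect : ∀ e f : Term A, cl H e.lang = cl H f.lang → cl H' (r e).lang = cl H' (r f).lang

def Reduces {A : Type} (H H' : HypSet A) : Prop := ∃ r, IsReduction H H' r

/-- A strong reduction from `H` to `H'`. -/
structure IsStrongReduction {A : Type} (H H' : HypSet A) (r : Term A → Term A)
    extends IsReduction H H' r : Prop where
  strong : ∀ e : Term A, cl H e.lang = cl H' (r e).lang

def StronglyReduces {A : Type} (H H' : HypSet A) : Prop := ∃ r, IsStrongReduction H H' r

/-- `H` factorises into `H₀` and `H₁`. -/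
def Factorises {A : Type} (H H₀ H₁ : HypSet A) : Prop :=
  Implies H H₀ ∧ Implies H H₁ ∧ ∀ L : Lang A, L ⊆ SPset A → cl H L = cl H₁ (cl H₀ L)

/-! ### The exchange hypotheses and sp-subsumption -/

/-- The exchange hypotheses `(e∥f)·(g∥h) ≤ (e·g)∥(f·h)`. -/
def exch (A : Type) : HypSet A :=
  {p | ∃ e f g h : Term A,
    p = (Term.seq (.par e f) (.par g h), Term.par (.seq e g) (.seq f h))}

/-- `⊑^sp`: the smallest precongruence on series-parallel pomsets satisfying the
exchange inequality. -/
inductive spSub {A : Type} : Pomset A → Pomset A → Prop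
  | refl {U : Pomset A} : U.IsSP → spSub U U
  | trans {U V W} : spSub U V → spSub V W → spSub U W
  | seqCong {U V U' V'} : spSub U V → spSub U' V' → spSub (Pomset.seq U U') (Pomset.seq V V')
  | parCong {U V U' V'} : spSub U V → spSub U' V' → spSub (Pomset.par U U') (Pomset.par V V')
  | exch {U V W X : Pomset A} : U.IsSP → V.IsSP → W.IsSP → X.IsSP →
      spSub (Pomset.seq (Pomset.par U V) (Pomset.par W X))
            (Pomset.par (Pomset.seq U W) (Pomset.seq V X))

/-! ### KA terms, grounded hypotheses, sequential reductions -/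

/-- A term is a KA term when it contains no `∥`. -/
def Term.noPar {A : Type} : Term A → Prop
  | .zero => True
  | .one => True
  | .var _ => True
  | .add e f => e.noPar ∧ f.noPar
  | .seq e f => e.noPar ∧ f.noPar
  | .par _ _ => False
  | .star e => e.noPar

/-- A non-empty word. -/
def IsNonemptyWord {A : Type} (W : Pomset A) : Prop := W.IsWord ∧ W ≠ Pomset.empty A

/-- A set of hypotheses is grounded when in each hypothesis `e ≤ f`, `e` is a KA term and
`⟦f⟧ = {W}` for a non-empty word `W`. -/
def Grounded {A : Type} (H : HypSet A) : Prop :=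
  ∀ p ∈ H, p.1.noPar ∧ ∃ W : Pomset A, IsNonemptyWord W ∧ p.2.lang = {W}

/-- `≡_KA^H`: the congruence on terms generated by the axioms of `≡` not involving `∥`
together with the hypotheses of `H`. -/
inductive KACong {A : Type} (H : HypSet A) : Term A → Term A → Prop
  | refl (e) : KACong H e e
  | symm {e f} : KACong H e f → KACong H f e
  | trans {e f g} : KACong H e f → KACong H f g → KACong H e g
  | addCong {e e' f f'} : KACong H e e' → KACong H f f' → KACong H (.add e f) (.add e' f')
  | seqCong {e e' f f'} : KACong H e e' → KACong H f f' → KACong H (.seq e f) (.seq e' f')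
  | starCong {e e'} : KACong H e e' → KACong H (.star e) (.star e')
  | addZero (e) : KACong H (.add e .zero) e
  | addIdem (e) : KACong H (.add e e) e
  | addComm (e f) : KACong H (.add e f) (.add f e)
  | addAssoc (e f g) : KACong H (.add e (.add f g)) (.add (.add e f) g)
  | seqAssoc (e f g) : KACong H (.seq e (.seq f g)) (.seq (.seq e f) g)
  | seqDistL (e f g) : KACong H (.seq e (.add f g)) (.add (.seq e f) (.seq e g))
  | seqDistR (e f g) : KACong H (.seq (.add e f) g) (.add (.seq e g) (.seq f g))
  | seqOneR (e) : KACong H (.seq e .one) e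
  | seqOneL (e) : KACong H (.seq .one e) e
  | seqZeroR (e) : KACong H (.seq e .zero) .zero
  | seqZeroL (e) : KACong H (.seq .zero e) .zero
  | starUnfoldL (e) : KACong H (.add .one (.seq e (.star e))) (.star e)
  | starUnfoldR (e) : KACong H (.add .one (.seq (.star e) e)) (.star e)
  | lfpL {e f g} : KACong H (.add (.add e (.seq f g)) g) g →
      KACong H (.add (.seq (.star f) e) g) g
  | lfpR {e f g} : KACong H (.add (.add e (.seq f g)) f) f →
      KACong H (.add (.seq e (.star g)) f) f
  | hyp {e f} : (e, f) ∈ H → KACong H (.add e f) f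

/-- A sequential reduction from `H` to `H'`. -/
structure IsSeqReduction {A : Type} (H H' : HypSet A) (r : Term A → Term A) : Prop where
  implies : Implies H H'
  equiv : ∀ e : Term A, e.noPar → KACong H e (r e)
  closure_eq : ∀ e : Term A, e.noPar → seqCl H e.lang = seqCl H' (r e).lang

/-- Extension of a map on (KA) terms to all CKA terms, homomorphically on `∥`. -/
def parExt {A : Type} (r : Term A → Term A) : Term A → Term A
  | .par e f => .par (parExt r e) (parExt r f)
  | e => r e

/-! ### Inductive characterisation of sp contexts -/

/-- The generators of series-parallel contexts (Lemma: `PC^sp` is the smallest such set). -/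
inductive GenCtx {A : Type} : Pomset (Option A) → Prop
  | star : GenCtx (Pomset.single (none : Option A))
  | seqL {U : Pomset A} {C} : U.IsSP → GenCtx C → GenCtx (Pomset.seq (Pomset.map some U) C)
  | seqR {C} {V : Pomset A} : GenCtx C → V.IsSP → GenCtx (Pomset.seq C (Pomset.map some V))
  | par {U : Pomset A} {C} : U.IsSP → GenCtx C → GenCtx (Pomset.par (Pomset.map some U) C)

/-! ### Reification -/

/-- Homomorphic extension of a letter map to terms. -/
def rTerm {A : Type} (r : A → Term A) : Term A → Term A
  | .zero => .zero
  | .one => .one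
  | .var a => r a
  | .add e f => .add (rTerm r e) (rTerm r f)
  | .seq e f => .seq (rTerm r e) (rTerm r f)
  | .par e f => .par (rTerm r e) (rTerm r f)
  | .star e => .star (rTerm r e)

/-- All letters of a term lie in `Γ`. -/
def TermOver {A : Type} (Γ : Set A) : Term A → Prop
  | .zero => True
  | .one => True
  | .var a => a ∈ Γ
  | .add e f => TermOver Γ e ∧ TermOver Γ f
  | .seq e f => TermOver Γ e ∧ TermOver Γ f
  | .par e f => TermOver Γ e ∧ TermOver Γ f
  | .star e => TermOver Γ e

/-- Extension of a letter map `r` to (series-parallel) pomsets, as a relation: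
`rMap r U V` means `V ∈ r(U)`. -/
inductive rMap {A : Type} (r : A → Term A) : Pomset A → Pomset A → Prop
  | one : rMap r (Pomset.empty A) (Pomset.empty A)
  | var (a : A) {V} : V ∈ (r a).lang → rMap r (Pomset.single a) V
  | seq {U U' V V'} : rMap r U V → rMap r U' V' →
      rMap r (Pomset.seq U U') (Pomset.seq V V')
  | par {U U' V V'} : rMap r U V → rMap r U' V' →
      rMap r (Pomset.par U U') (Pomset.par V V')

/-- Image of a language under (the pomset extension of) `r`. -/
def rImg {A : Type} (r : A → Term A) (L : Lang A) : Lang A := {V | ∃ U ∈ L, rMap r U V}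

/-- Series-parallel pomsets over the subalphabet `Γ`. -/
def SPover {A : Type} (Γ : Set A) : Lang A := {U | U.IsSP ∧ U.Over Γ}

/-- `r : Σ → Term Γ` is a reification from `H` to `H'`. -/
structure IsReification {A : Type} (Γ : Set A) (H H' : HypSet A) (r : A → Term A) : Prop where
  toGamma : ∀ a : A, TermOver Γ (r a)
  equiv : ∀ a : A, CongH H (r a) (.var a)
  expansive : ∀ a ∈ Γ, LeH (∅ : HypSet A) (.var a) (r a)
  preserves : ∀ L : Lang A, L ⊆ SPover Γ → cl H' L ⊆ SPover Γ
  hyps : ∀ p ∈ H, LeH H' (rTerm r p.1) (rTerm r p.2)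

end CKAH

namespace CKAH

/-!
Substituting a pomset for every letter, `Pomset.bind`, commutes with both compositions, and plugging
into a context is such a substitution, of the pomset for `*` and of every other letter for itself.

Substitution of nonempty pomsets reflects total orders: if `C[W]` is a word with `W ≠ 1`, then `C`
is a sequential context, which gives (i). Substitution of pomsets that are not proper parallel
compositions reflects parallel compositions: if `C[W] = U ∥ V` with `W` a nonempty word, then each
substituted copy lies entirely in `U` or entirely in `V`, so `C` itself is a parallel composition
and one closure step applied to `U ∥ V` is a closure step in one of the two components. This is the
inclusion from left to right in (ii); the other one replays closure steps in the contexts `C ∥ V`.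
-/

/-- The isomorphism class of a labelled poset. -/
def LPoset.toPomset {A : Type} (u : LPoset A) : Pomset A := ⟦u⟧

/-- A representative of a pomset. -/
noncomputable def Pomset.out {A : Type} (U : Pomset A) : LPoset A := Quotient.out U

theorem Pomset.toPomset_out {A : Type} (U : Pomset A) : U.out.toPomset = U := Quotient.out_eq U

theorem Pomset.exists_toPomset_eq {A : Type} (U : Pomset A) : ∃ u : LPoset A, u.toPomset = U :=
  ⟨U.out, U.toPomset_out⟩

theorem compl_range_comp_inl {α β γ : Type*} (e : α ⊕ β ≃ γ) :
    (Set.range fun x => e (Sum.inl x))ᶜ = Set.range fun y => e (Sum.inr y) := by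
  rw [Set.range_comp' e, Set.range_comp' e, ← e.image_compl, Set.compl_range_inl]

namespace LPoset

variable {A : Type} {u v : LPoset A}

theorem toPomset_eq_toPomset_iff :
    u.toPomset = v.toPomset ↔ ∃ e : u.carrier ≃o v.carrier, ∀ x, v.lab (e x) = u.lab x :=
  Quotient.eq

theorem toPomset_eq_of_surjective (f : u.carrier → v.carrier) (hf : Function.Surjective f)
    (hle : ∀ x y, f x ≤ f y ↔ x ≤ y) (hlab : ∀ x, v.lab (f x) = u.lab x) :
    u.toPomset = v.toPomset :=
  toPomset_eq_toPomset_iff.2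
    ⟨RelIso.ofSurjective (OrderEmbedding.ofMapLEIff f hle) hf, hlab⟩

theorem toPomset_eq_empty_iff : u.toPomset = Pomset.empty A ↔ IsEmpty u.carrier := by
  refine ⟨fun h => ?_, fun _ => ?_⟩
  · obtain ⟨e, -⟩ := toPomset_eq_toPomset_iff.1 (h : _ = (emptyL A).toPomset)
    exact e.toEquiv.isEmpty_congr.2 Fin.isEmpty
  · exact toPomset_eq_of_surjective (v := emptyL A) (fun x => isEmptyElim x)
      (fun x => x.elim0) (fun x => isEmptyElim x) (fun x => isEmptyElim x)

theorem toPomset_eq_single_iff {a : A} :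
    u.toPomset = Pomset.single a ↔ ∃ x, (∀ y, y = x) ∧ u.lab x = a := by
  refine ⟨fun h => ?_, fun ⟨x, hx, ha⟩ => ?_⟩
  · obtain ⟨e, he⟩ := toPomset_eq_toPomset_iff.1 (h : _ = (singleL a).toPomset)
    exact ⟨e.symm PUnit.unit, fun y => e.injective (Subsingleton.elim (α := PUnit) _ _),
      (he _).symm⟩
  · refine toPomset_eq_of_surjective (v := singleL a) (fun _ => PUnit.unit) (fun _ => ⟨x, rfl⟩)
      (fun y z => ?_) fun y => by rw [hx y, ha]; rfl
    rw [hx y, hx z]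
    exact ⟨fun _ => le_rfl, fun _ => le_rfl⟩

/-- The labelled poset induced on a subset of the carrier. -/
noncomputable def restrict (u : LPoset A) (s : Set u.carrier) : LPoset A where
  carrier := s
  fin := Fintype.ofFinite s
  lab x := u.lab x

theorem toPomset_restrict_eq (f : v.carrier → u.carrier) (hle : ∀ x y, f x ≤ f y ↔ x ≤ y)
    (hlab : ∀ x, u.lab (f x) = v.lab x) {s : Set u.carrier} (hs : Set.range f = s) :
    (u.restrict s).toPomset = v.toPomset := by
  subst hs
  exact (toPomset_eq_of_surjective (v := u.restrict (Set.range f)) (Set.rangeFactorization f)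
    Set.rangeFactorization_surjective hle hlab).symm

theorem toPomset_eq_seq_iff {U V : Pomset A} :
    u.toPomset = U.seq V ↔ ∃ s : Set u.carrier, (∀ x ∈ s, ∀ y ∉ s, x < y) ∧
      (u.restrict s).toPomset = U ∧ (u.restrict sᶜ).toPomset = V := by
  refine ⟨fun h => ?_, ?_⟩
  · obtain ⟨v, rfl⟩ := U.exists_toPomset_eq
    obtain ⟨w, rfl⟩ := V.exists_toPomset_eq
    obtain ⟨e, he⟩ := toPomset_eq_toPomset_iff.1 (h.symm : (v.seqL w).toPomset = _)
    have hcompl : (Set.range fun x => e (Sum.inlₗ x))ᶜ = Set.range fun y => e (Sum.inrₗ y) :=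
      (compl_range_comp_inl (e.toEquiv : v.carrier ⊕ w.carrier ≃ u.carrier))
    refine ⟨Set.range fun x => e (Sum.inlₗ x), ?_, ?_, ?_⟩
    · rintro _ ⟨x, rfl⟩ y hy
      obtain ⟨y, rfl⟩ := hcompl.subset hy
      exact e.lt_iff_lt.2 (Sum.Lex.inl_lt_inr x y)
    · exact toPomset_restrict_eq _ (fun _ _ => e.le_iff_le.trans Sum.Lex.inl_le_inl_iff)
        (fun _ => he _) rfl
    · exact toPomset_restrict_eq _ (fun _ _ => e.le_iff_le.trans Sum.Lex.inr_le_inr_iff)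
        (fun _ => he _) hcompl.symm
  · rintro ⟨s, hs, rfl, rfl⟩
    refine (toPomset_eq_of_surjective (u := (u.restrict s).seqL (u.restrict sᶜ))
      (fun x => Sum.elim Subtype.val Subtype.val (ofLex x)) (fun x => ?_) ?_ ?_).symm
    · by_cases hx : x ∈ s
      · exact ⟨Sum.inlₗ ⟨x, hx⟩, rfl⟩
      · exact ⟨Sum.inrₗ ⟨x, hx⟩, rfl⟩
    · rintro (x | x) (y | y)
      · exact (Sum.Lex.inl_le_inl_iff (a := x) (b := y)).symm
      · exact iff_of_true (hs _ x.2 _ y.2).le (Sum.Lex.inl_le_inr x y)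
      · exact iff_of_false (hs _ y.2 _ x.2).not_ge Sum.Lex.not_inr_le_inl
      · exact (Sum.Lex.inr_le_inr_iff (a := x) (b := y)).symm
    · rintro (x | x) <;> rfl

theorem toPomset_eq_par_iff {U V : Pomset A} :
    u.toPomset = U.par V ↔ ∃ s : Set u.carrier, (∀ x ∈ s, ∀ y ∉ s, IncompRel (· ≤ ·) x y) ∧
      (u.restrict s).toPomset = U ∧ (u.restrict sᶜ).toPomset = V := by
  refine ⟨fun h => ?_, ?_⟩
  · obtain ⟨v, rfl⟩ := U.exists_toPomset_eq
    obtain ⟨w, rfl⟩ := V.exists_toPomset_eq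
    obtain ⟨e, he⟩ := toPomset_eq_toPomset_iff.1 (h.symm : (v.parL w).toPomset = _)
    have hcompl : (Set.range fun x => e (Sum.inl x))ᶜ = Set.range fun y => e (Sum.inr y) :=
      compl_range_comp_inl e.toEquiv
    refine ⟨Set.range fun x => e (Sum.inl x), ?_, ?_, ?_⟩
    · rintro _ ⟨x, rfl⟩ y hy
      obtain ⟨y, rfl⟩ := hcompl.subset hy
      exact ⟨fun h => Sum.not_inl_le_inr (e.le_iff_le.1 h),
        fun h => Sum.not_inr_le_inl (e.le_iff_le.1 h)⟩
    · exact toPomset_restrict_eq _ (fun _ _ => e.le_iff_le.trans Sum.inl_le_inl_iff)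
        (fun _ => he _) rfl
    · exact toPomset_restrict_eq _ (fun _ _ => e.le_iff_le.trans Sum.inr_le_inr_iff)
        (fun _ => he _) hcompl.symm
  · rintro ⟨s, hs, rfl, rfl⟩
    refine (toPomset_eq_of_surjective (u := (u.restrict s).parL (u.restrict sᶜ))
      (Sum.elim Subtype.val Subtype.val) (fun x => ?_) ?_ ?_).symm
    · by_cases hx : x ∈ s
      · exact ⟨Sum.inl ⟨x, hx⟩, rfl⟩
      · exact ⟨Sum.inr ⟨x, hx⟩, rfl⟩
    · rintro (x | x) (y | y)
      · exact (Sum.inl_le_inl_iff (a := x) (b := y)).symm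
      · exact iff_of_false (hs _ x.2 _ y.2).1 Sum.not_inl_le_inr
      · exact iff_of_false (hs _ y.2 _ x.2).2 Sum.not_inr_le_inl
      · exact (Sum.inr_le_inr_iff (a := x) (b := y)).symm
    · rintro (x | x) <;> rfl

theorem isWord_toPomset_iff :
    u.toPomset.IsWord ↔ ∀ x y : u.carrier, x ≤ y ∨ y ≤ x := Iff.rfl

theorem isSP_toPomset_of_subsingleton [Subsingleton u.carrier] : u.toPomset.IsSP := by
  rcases isEmpty_or_nonempty u.carrier with _ | ⟨⟨x⟩⟩
  · rw [toPomset_eq_empty_iff.2 ‹_›]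
    exact .empty
  · rw [toPomset_eq_single_iff.2 ⟨x, fun y => Subsingleton.elim y x, rfl⟩]
    exact .single _

theorem isSP_toPomset_of_le_iff_le {B : Type} {v : LPoset B} (hv : v.toPomset.IsSP)
    (f : u.carrier → v.carrier) (hf : ∀ x y, f x ≤ f y ↔ x ≤ y) : u.toPomset.IsSP := by
  generalize hV : v.toPomset = V at hv
  induction hv generalizing u v with
  | empty =>
    have := toPomset_eq_empty_iff.1 hV
    have := f.isEmpty
    exact isSP_toPomset_of_subsingleton
  | single b =>
    obtain ⟨x, hx, -⟩ := toPomset_eq_single_iff.1 hV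
    have : Subsingleton u.carrier := ⟨fun y z => le_antisymm
      ((hf y z).1 (by rw [hx (f y), hx (f z)])) ((hf z y).1 (by rw [hx (f y), hx (f z)]))⟩
    exact isSP_toPomset_of_subsingleton
  | seq _ _ ihU ihV =>
    obtain ⟨s, hs, hU, hV⟩ := toPomset_eq_seq_iff.1 hV
    rw [toPomset_eq_seq_iff.2 ⟨f ⁻¹' s, fun x hx y hy =>
      lt_iff_lt_of_le_iff_le' (hf y x) (hf x y) |>.1 (hs _ hx _ hy), rfl, rfl⟩]
    exact .seq (ihU (v := v.restrict s) (s.restrictPreimage f) (fun x y => hf x.1 y.1) hU)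
      (ihV (v := v.restrict sᶜ) (sᶜ.restrictPreimage f) (fun x y => hf x.1 y.1) hV)
  | par _ _ ihU ihV =>
    obtain ⟨s, hs, hU, hV⟩ := toPomset_eq_par_iff.1 hV
    rw [toPomset_eq_par_iff.2 ⟨f ⁻¹' s, fun x hx y hy =>
      ⟨mt (hf x y).2 (hs _ hx _ hy).1, mt (hf y x).2 (hs _ hx _ hy).2⟩, rfl, rfl⟩]
    exact .par (ihU (v := v.restrict s) (s.restrictPreimage f) (fun x y => hf x.1 y.1) hU)
      (ihV (v := v.restrict sᶜ) (sᶜ.restrictPreimage f) (fun x y => hf x.1 y.1) hV)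

end LPoset

namespace Pomset

variable {A B : Type} {U V : Pomset A}

open LPoset

theorem par_comm (U V : Pomset A) : U.par V = V.par U := by
  obtain ⟨u, hu⟩ := (U.par V).exists_toPomset_eq
  obtain ⟨s, hs, rfl, rfl⟩ := toPomset_eq_par_iff.1 hu
  rw [← hu, toPomset_eq_par_iff]
  refine ⟨sᶜ, fun x hx y hy => (hs y (not_not.1 hy) x hx).symm, rfl, by rw [compl_compl]⟩

theorem IsSP.map (hU : U.IsSP) (f : A → B) : (U.map f).IsSP := by
  obtain ⟨u, rfl⟩ := U.exists_toPomset_eq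
  exact isSP_toPomset_of_le_iff_le (u := u.mapL f) hU id fun _ _ => Iff.rfl

theorem isSP_par_iff : (U.par V).IsSP ↔ U.IsSP ∧ V.IsSP := by
  refine ⟨fun h => ?_, fun ⟨hU, hV⟩ => .par hU hV⟩
  obtain ⟨u, rfl⟩ := U.exists_toPomset_eq
  obtain ⟨v, rfl⟩ := V.exists_toPomset_eq
  exact ⟨isSP_toPomset_of_le_iff_le (v := u.parL v) h Sum.inl fun _ _ => Sum.inl_le_inl_iff,
    isSP_toPomset_of_le_iff_le (v := u.parL v) h Sum.inr fun _ _ => Sum.inr_le_inr_iff⟩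

theorem isWord_empty : (Pomset.empty A).IsWord := fun x => x.elim0

theorem isWord_single (a : A) : (Pomset.single a).IsWord := fun _ _ => Or.inl le_rfl

theorem IsWord.restrict {u : LPoset A} (hu : u.toPomset.IsWord) (s : Set u.carrier) :
    (u.restrict s).toPomset.IsWord := fun x y => hu x.1 y.1

theorem IsWord.seq (hU : U.IsWord) (hV : V.IsWord) : (U.seq V).IsWord := by
  obtain ⟨u, rfl⟩ := U.exists_toPomset_eq
  obtain ⟨v, rfl⟩ := V.exists_toPomset_eq
  rintro (x | x) (y | y)
  · exact (hU x y).imp Sum.Lex.inl_le_inl_iff.2 Sum.Lex.inl_le_inl_iff.2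
  · exact Or.inl (Sum.Lex.inl_le_inr x y)
  · exact Or.inr (Sum.Lex.inl_le_inr y x)
  · exact (hV x y).imp Sum.Lex.inr_le_inr_iff.2 Sum.Lex.inr_le_inr_iff.2

theorem IsWord.isSP (hU : U.IsWord) : U.IsSP := by
  obtain ⟨u, rfl⟩ := U.exists_toPomset_eq
  induction hn : Nat.card u.carrier using Nat.strong_induction_on generalizing u with | _ n ih
  subst hn
  rcases subsingleton_or_nontrivial u.carrier with _ | ⟨x, y, hxy⟩
  · exact isSP_toPomset_of_subsingleton
  wlog hle : x ≤ y generalizing x y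
  · exact this y x hxy.symm ((hU x y).resolve_left hle)
  have isSP_restrict : ∀ s : Set u.carrier, s ≠ Set.univ → (u.restrict s).toPomset.IsSP :=
    fun s hs => ih _ (Set.ncard_lt_card hs) _ (hU.restrict s) rfl
  have hcut : ∀ z ∈ Set.Iic x, ∀ w ∉ Set.Iic x, z < w := fun z hz w hw =>
    hz.trans_lt (((hU w x).resolve_left hw).lt_of_ne fun h => hw h.ge)
  rw [toPomset_eq_seq_iff.2 ⟨Set.Iic x, hcut, rfl, rfl⟩]
  refine .seq (isSP_restrict _ fun h => ?_) (isSP_restrict _ fun h => ?_)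
  · exact hxy (hle.antisymm (h.ge (Set.mem_univ y)))
  · exact h.ge (Set.mem_univ x) (Set.mem_Iic.2 le_rfl)

end Pomset

section Terms

variable {A : Type}

theorem Lang.star_subset {L P : Lang A} (hempty : Pomset.empty A ∈ P)
    (hseq : ∀ U ∈ P, ∀ V ∈ P, U.seq V ∈ P) (hL : L ⊆ P) : L.star ⊆ P := by
  refine Set.iUnion_subset fun n => ?_
  induction n with
  | zero => rintro _ rfl; exact hempty
  | succ n ih => rintro _ ⟨U, hU, V, hV, rfl⟩; exact hseq U (ih hU) V (hL hV)

theorem Term.lang_subset_SPset (e : Term A) : e.lang ⊆ SPset A := by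
  induction e with
  | zero => exact Set.empty_subset _
  | one => rintro _ rfl; exact .empty
  | var a => rintro _ rfl; exact .single a
  | add e f ihe ihf => exact Set.union_subset ihe ihf
  | seq e f ihe ihf => rintro _ ⟨U, hU, V, hV, rfl⟩; exact .seq (ihe hU) (ihf hV)
  | par e f ihe ihf => rintro _ ⟨U, hU, V, hV, rfl⟩; exact .par (ihe hU) (ihf hV)
  | star e ihe => exact Lang.star_subset .empty (fun _ hU _ hV => .seq hU hV) ihe

theorem Term.noPar.isWord {e : Term A} (he : e.noPar) : ∀ U ∈ e.lang, U.IsWord := by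
  induction e with
  | zero => exact fun _ h => h.elim
  | one => rintro _ rfl; exact Pomset.isWord_empty
  | var a => rintro _ rfl; exact Pomset.isWord_single a
  | add e f ihe ihf => exact fun U hU => hU.elim (ihe he.1 U) (ihf he.2 U)
  | seq e f ihe ihf =>
    rintro _ ⟨U, hU, V, hV, rfl⟩
    exact (ihe he.1 U hU).seq (ihf he.2 V hV)
  | par e f _ _ => exact he.elim
  | star e ihe =>
    exact Lang.star_subset (P := {U | U.IsWord}) Pomset.isWord_empty
      (fun _ hU _ hV => hU.seq hV) (ihe he)

end Terms

namespace LPoset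

variable {A B : Type} {c d : LPoset B} {u v : LPoset A} {σ : B → Pomset A}

/-- `p` contracts `u` onto `c`, the fibre over a point labelled `b` being a copy of `σ b`. Such a
`p` says that `u` arises from `c` by substituting `σ b` for every letter `b`. -/
structure IsCollapse (σ : B → Pomset A) (p : u.carrier → c.carrier) : Prop where
  le_iff_of_ne : ∀ x y, p x ≠ p y → (x ≤ y ↔ p x ≤ p y)
  toPomset_fiber : ∀ i, (u.restrict (p ⁻¹' {i})).toPomset = σ (c.lab i)

namespace IsCollapse

variable {p : u.carrier → c.carrier} {q : v.carrier → d.carrier}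

theorem toPomset_congr (hp : IsCollapse σ p) (hq : IsCollapse σ q)
    (h : c.toPomset = d.toPomset) : u.toPomset = v.toPomset := by
  obtain ⟨e, he⟩ := toPomset_eq_toPomset_iff.1 h
  have fiber_iso : ∀ i, ∃ f : ↥(p ⁻¹' {i}) ≃o ↥(q ⁻¹' {e i}), ∀ x, v.lab (f x) = u.lab x :=
    fun i => toPomset_eq_toPomset_iff (u := u.restrict (p ⁻¹' {i}))
      (v := v.restrict (q ⁻¹' {e i})).1
        ((hp.toPomset_fiber i).trans (by rw [hq.toPomset_fiber, he]))
  choose f hf using fiber_iso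
  let g : u.carrier → v.carrier := fun x => f (p x) ⟨x, rfl⟩
  have g_eq : ∀ {i} (x : ↥(p ⁻¹' {i})), g x = f i x := by rintro _ ⟨x, rfl⟩; rfl
  have q_g : ∀ x, q (g x) = e (p x) := fun x => (f (p x) ⟨x, rfl⟩).2
  refine toPomset_eq_of_surjective g (fun y => ?_) (fun x y => ?_) fun x => hf _ _
  · have hy : q y = e (e.symm (q y)) := (e.apply_symm_apply _).symm
    exact ⟨(f _).symm ⟨y, hy⟩, (g_eq _).trans (congrArg Subtype.val ((f _).apply_symm_apply _))⟩
  · by_cases hxy : p x = p y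
    · rw [g_eq (⟨x, hxy⟩ : ↥(p ⁻¹' {p y})), g_eq (⟨y, rfl⟩ : ↥(p ⁻¹' {p y}))]
      exact (f (p y)).le_iff_le
    · rw [hp.le_iff_of_ne x y hxy, hq.le_iff_of_ne, q_g, q_g, e.le_iff_le]
      rwa [q_g, q_g, e.injective.ne_iff]

theorem lt_of_lt (hp : IsCollapse σ p) {x y : u.carrier} (h : p x < p y) : x < y :=
  lt_of_le_not_ge ((hp.le_iff_of_ne x y h.ne).2 h.le)
    fun h' => h.not_ge ((hp.le_iff_of_ne y x h.ne').1 h')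

theorem incompRel_iff_of_ne (hp : IsCollapse σ p) {x y : u.carrier} (h : p x ≠ p y) :
    IncompRel (· ≤ ·) x y ↔ IncompRel (· ≤ ·) (p x) (p y) := by
  rw [IncompRel, IncompRel, hp.le_iff_of_ne x y h, hp.le_iff_of_ne y x h.symm]

theorem restrict (hp : IsCollapse σ p) (t : Set c.carrier) :
    IsCollapse (u := u.restrict (p ⁻¹' t)) (c := c.restrict t) σ (t.restrictPreimage p) where
  le_iff_of_ne x y h := hp.le_iff_of_ne x.1 y.1 (Subtype.coe_injective.ne_iff.2 h)
  toPomset_fiber i := by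
    refine (toPomset_restrict_eq (v := (u.restrict _).restrict _) (fun x => x.1.1)
      (fun _ _ => Iff.rfl) (fun _ => rfl) ?_).symm.trans (hp.toPomset_fiber i.1)
    ext x
    refine ⟨?_, fun hx => ?_⟩
    · rintro ⟨⟨y, rfl⟩, rfl⟩
      rfl
    · have hxt : p x ∈ t := Set.mem_of_eq_of_mem hx i.2
      exact ⟨⟨⟨x, hxt⟩, Subtype.ext hx⟩, rfl⟩

theorem comp_orderIso (hp : IsCollapse σ p) (e : v.carrier ≃o u.carrier)
    (he : ∀ x, u.lab (e x) = v.lab x) : IsCollapse σ (p ∘ e) where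
  le_iff_of_ne _ _ h := e.le_iff_le.symm.trans (hp.le_iff_of_ne _ _ h)
  toPomset_fiber i := by
    refine (toPomset_restrict_eq (v := v.restrict _) (fun x => e x.1) (fun _ _ => e.le_iff_le)
      (fun x => he x.1) ?_).symm.trans (hp.toPomset_fiber i)
    exact (Set.range_comp e _).trans ((congrArg _ Subtype.range_coe).trans
      (Set.image_preimage_eq (p ⁻¹' {i}) e.surjective))

theorem surjective (hp : IsCollapse σ p) (hσ : ∀ b, σ b ≠ Pomset.empty A) :
    Function.Surjective p := by
  intro i
  by_contra! hi
  exact hσ (c.lab i) ((hp.toPomset_fiber i).symm.trans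
    (toPomset_eq_empty_iff.2 ⟨fun x => hi x.1 x.2⟩))

end IsCollapse

/-- The labelled poset obtained from `c` by substituting `σ b` for every letter `b`: a
lexicographic sum of representatives of the `σ b`. -/
noncomputable def subst (c : LPoset B) (σ : B → Pomset A) : LPoset A where
  carrier := Σₗ i : c.carrier, (σ (c.lab i)).out.carrier
  fin := inferInstanceAs (Fintype (Σ i : c.carrier, (σ (c.lab i)).out.carrier))
  ord := Sigma.Lex.partialOrder
  lab x := (σ (c.lab x.1)).out.lab x.2

theorem isCollapse_subst (c : LPoset B) (σ : B → Pomset A) :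
    IsCollapse (u := c.subst σ) (c := c) σ Sigma.fst where
  le_iff_of_ne x y h := by
    refine Sigma.Lex.le_def.trans ⟨?_, fun hle => Or.inl (hle.lt_of_ne h)⟩
    rintro (hlt | ⟨heq, -⟩)
    · exact hlt.le
    · exact (h heq).elim
  toPomset_fiber i := by
    refine (toPomset_restrict_eq (u := c.subst σ) (v := (σ (c.lab i)).out) (fun x => ⟨i, x⟩)
      (fun x y => ?_) (fun _ => rfl) (Set.ext fun x => ⟨?_, ?_⟩)).trans (Pomset.toPomset_out _)
    · exact Sigma.Lex.le_def.trans (by simp)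
    · rintro ⟨y, rfl⟩
      rfl
    · rintro rfl
      exact ⟨x.2, rfl⟩

end LPoset

/-- The pomset obtained from `C` by substituting `σ b` for every letter `b`. -/
noncomputable def Pomset.bind {A B : Type} (C : Pomset B) (σ : B → Pomset A) : Pomset A :=
  Quotient.lift (fun c : LPoset B => (c.subst σ).toPomset)
    (fun c d h => (LPoset.isCollapse_subst c σ).toPomset_congr (LPoset.isCollapse_subst d σ)
      (Quotient.sound h)) C

namespace LPoset

variable {A B : Type} {c : LPoset B} {u : LPoset A} {σ : B → Pomset A}

theorem toPomset_eq_bind_iff :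
    u.toPomset = c.toPomset.bind σ ↔ ∃ p : u.carrier → c.carrier, IsCollapse σ p := by
  refine ⟨fun h => ?_, fun ⟨p, hp⟩ => hp.toPomset_congr (isCollapse_subst c σ) rfl⟩
  obtain ⟨e, he⟩ := toPomset_eq_toPomset_iff.1 (h : _ = (c.subst σ).toPomset)
  exact ⟨_, (isCollapse_subst c σ).comp_orderIso e he⟩

theorem IsCollapse.toPomset_eq_bind {p : u.carrier → c.carrier} (hp : IsCollapse σ p) :
    u.toPomset = c.toPomset.bind σ :=
  toPomset_eq_bind_iff.2 ⟨p, hp⟩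

end LPoset

namespace Pomset

open LPoset

variable {A B : Type} {C : Pomset B} {U V W : Pomset A} {σ : B → Pomset A}

theorem empty_bind (σ : B → Pomset A) : (Pomset.empty B).bind σ = Pomset.empty A :=
  toPomset_eq_empty_iff.2 ⟨fun x => x.1.elim0⟩

theorem single_bind (b : B) (σ : B → Pomset A) : (Pomset.single b).bind σ = σ b := by
  obtain ⟨u, hu⟩ := (σ b).exists_toPomset_eq
  rw [← hu, eq_comm]
  refine toPomset_eq_bind_iff (c := singleL b).2 ⟨fun _ => PUnit.unit, ?_, fun i => ?_⟩
  · exact fun _ _ h => (h rfl).elim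
  · exact (toPomset_restrict_eq id (fun _ _ => Iff.rfl) (fun _ => rfl)
      (Set.ext fun x => iff_of_true ⟨x, rfl⟩ rfl)).trans hu

theorem seq_bind (C D : Pomset B) (σ : B → Pomset A) :
    (C.seq D).bind σ = (C.bind σ).seq (D.bind σ) := by
  obtain ⟨c, hc⟩ := (C.seq D).exists_toPomset_eq
  obtain ⟨u, hu⟩ := ((C.seq D).bind σ).exists_toPomset_eq
  obtain ⟨s, hs, rfl, rfl⟩ := toPomset_eq_seq_iff.1 hc
  rw [← hu]
  rw [← hc] at hu
  obtain ⟨p, hp⟩ := toPomset_eq_bind_iff.1 hu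
  exact toPomset_eq_seq_iff.2 ⟨p ⁻¹' s, fun x hx y hy => hp.lt_of_lt (hs _ hx _ hy),
    (hp.restrict s).toPomset_eq_bind, (hp.restrict sᶜ).toPomset_eq_bind⟩

theorem par_bind (C D : Pomset B) (σ : B → Pomset A) :
    (C.par D).bind σ = (C.bind σ).par (D.bind σ) := by
  obtain ⟨c, hc⟩ := (C.par D).exists_toPomset_eq
  obtain ⟨u, hu⟩ := ((C.par D).bind σ).exists_toPomset_eq
  obtain ⟨s, hs, rfl, rfl⟩ := toPomset_eq_par_iff.1 hc
  rw [← hu]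
  rw [← hc] at hu
  obtain ⟨p, hp⟩ := toPomset_eq_bind_iff.1 hu
  refine toPomset_eq_par_iff.2 ⟨p ⁻¹' s, fun x hx y hy => ?_,
    (hp.restrict s).toPomset_eq_bind, (hp.restrict sᶜ).toPomset_eq_bind⟩
  have hne : p x ≠ p y := fun h => hy (Set.mem_preimage.2 (h ▸ hx))
  exact (hp.incompRel_iff_of_ne hne).2 (hs _ hx _ hy)

theorem IsSP.bind (hC : C.IsSP) (hσ : ∀ b, (σ b).IsSP) : (C.bind σ).IsSP := by
  induction hC with
  | empty => rw [empty_bind]; exact .empty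
  | single b => rw [single_bind]; exact hσ b
  | seq _ _ ihU ihV => rw [seq_bind]; exact ihU.seq ihV
  | par _ _ ihU ihV => rw [par_bind]; exact ihU.par ihV

theorem IsWord.bind (hC : C.IsWord) (hσ : ∀ b, (σ b).IsWord) : (C.bind σ).IsWord := by
  obtain ⟨c, rfl⟩ := C.exists_toPomset_eq
  obtain ⟨u, hu⟩ := (c.toPomset.bind σ).exists_toPomset_eq
  obtain ⟨p, hp⟩ := toPomset_eq_bind_iff.1 hu
  rw [← hu, isWord_toPomset_iff]
  intro x y
  by_cases hxy : p x = p y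
  · have hfiber : (u.restrict (p ⁻¹' {p y})).toPomset.IsWord := hp.toPomset_fiber _ ▸ hσ _
    exact hfiber ⟨x, hxy⟩ ⟨y, rfl⟩
  · rw [hp.le_iff_of_ne x y hxy, hp.le_iff_of_ne y x (Ne.symm hxy)]
    exact hC _ _

theorem IsWord.of_bind (h : (C.bind σ).IsWord) (hσ : ∀ b, σ b ≠ Pomset.empty A) : C.IsWord := by
  obtain ⟨c, rfl⟩ := C.exists_toPomset_eq
  obtain ⟨u, hu⟩ := (c.toPomset.bind σ).exists_toPomset_eq
  obtain ⟨p, hp⟩ := toPomset_eq_bind_iff.1 hu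
  rw [← hu, isWord_toPomset_iff] at h
  rw [isWord_toPomset_iff, (hp.surjective hσ).forall₂]
  intro x y
  by_cases hxy : p x = p y
  · exact Or.inl hxy.le
  · rw [← hp.le_iff_of_ne x y hxy, ← hp.le_iff_of_ne y x (Ne.symm hxy)]
    exact h x y

/-- A pomset that is not a parallel composition of two nonempty pomsets. The empty pomset is not
irreducible. -/
def IsParIrreducible (W : Pomset A) : Prop :=
  W ≠ Pomset.empty A ∧ ∀ U V, W = U.par V → U = Pomset.empty A ∨ V = Pomset.empty A

theorem IsWord.isParIrreducible (hW : W.IsWord) (hne : W ≠ Pomset.empty A) :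
    W.IsParIrreducible := by
  refine ⟨hne, fun U V h => ?_⟩
  obtain ⟨w, rfl⟩ := W.exists_toPomset_eq
  obtain ⟨s, hs, rfl, rfl⟩ := toPomset_eq_par_iff.1 h
  by_contra! hne
  simp only [Ne, toPomset_eq_empty_iff, not_isEmpty_iff] at hne
  obtain ⟨⟨x⟩, ⟨y⟩⟩ := hne
  exact (hW x.1 y.1).elim (hs _ x.2 _ y.2).1 (hs _ x.2 _ y.2).2

theorem IsParIrreducible.subset_or_subset_compl {u : LPoset A} {r s : Set u.carrier}
    (hr : (u.restrict r).toPomset.IsParIrreducible)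
    (hs : ∀ x ∈ s, ∀ y ∉ s, IncompRel (· ≤ ·) x y) : r ⊆ s ∨ r ⊆ sᶜ := by
  have hcut := (toPomset_eq_par_iff (u := u.restrict r)).2 ⟨Subtype.val ⁻¹' s,
    fun x hx y hy => hs _ hx _ hy, rfl, rfl⟩
  refine (hr.2 _ _ hcut).symm.imp (fun h x hx => ?_) fun h x hx hxs => ?_
  · by_contra hxs
    exact (toPomset_eq_empty_iff.1 h).false ⟨⟨x, hx⟩, hxs⟩
  · exact (toPomset_eq_empty_iff.1 h).false ⟨⟨x, hx⟩, hxs⟩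

theorem exists_par_of_bind_eq_par (hσ : ∀ b, (σ b).IsParIrreducible) (h : C.bind σ = U.par V) :
    ∃ C₁ C₂ : Pomset B, C = C₁.par C₂ ∧ C₁.bind σ = U ∧ C₂.bind σ = V := by
  obtain ⟨c, rfl⟩ := C.exists_toPomset_eq
  obtain ⟨u, hu⟩ := (c.toPomset.bind σ).exists_toPomset_eq
  obtain ⟨p, hp⟩ := toPomset_eq_bind_iff.1 hu
  obtain ⟨s, hs, rfl, rfl⟩ := toPomset_eq_par_iff.1 (hu.trans h)
  let t : Set c.carrier := {i | p ⁻¹' {i} ⊆ s}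
  have hpt : p ⁻¹' t = s := by
    refine Set.Subset.antisymm (fun x hx => hx rfl) fun x hx => ?_
    have hfiber : (u.restrict (p ⁻¹' {p x})).toPomset.IsParIrreducible :=
      hp.toPomset_fiber _ ▸ hσ _
    exact (hfiber.subset_or_subset_compl hs).resolve_right fun h => h rfl hx
  have ht : ∀ i ∈ t, ∀ j ∉ t, IncompRel (· ≤ ·) i j := by
    have hsurj := hp.surjective fun b => (hσ b).1
    refine hsurj.forall.2 fun x hx => hsurj.forall.2 fun y hy => ?_
    rw [← hp.incompRel_iff_of_ne fun h => hy (h ▸ hx)]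
    exact hs x (hpt.subset hx) y fun h => hy (hpt.superset h)
  refine ⟨_, _, toPomset_eq_par_iff.2 ⟨t, ht, rfl, rfl⟩, ?_, ?_⟩
  · rw [← hpt]
    exact (hp.restrict t).toPomset_eq_bind.symm
  · rw [← hpt]
    exact (hp.restrict tᶜ).toPomset_eq_bind.symm

end Pomset

namespace Pomset

open LPoset

variable {A : Type} {C D : Pomset (Option A)} {U V W : Pomset A}

/-- The substitution replacing `*` by `U` and leaving the letters of `A` unchanged. -/
def starSubst (U : Pomset A) : Option A → Pomset A := fun o => o.elim U Pomset.single

theorem forall_starSubst {P : Pomset A → Prop} (hsingle : ∀ a, P (Pomset.single a)) (hU : P U) :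
    ∀ o, P (starSubst U o)
  | none => hU
  | some a => hsingle a

theorem single_ne_empty (a : A) : Pomset.single a ≠ Pomset.empty A := fun h =>
  (toPomset_eq_empty_iff.1 h).false PUnit.unit

theorem isCtx_toPomset_iff {c : LPoset (Option A)} :
    c.toPomset.IsCtx ↔ ∃! x, c.lab x = none := Iff.rfl

theorem IsCtx.ins_eq_bind (hC : C.IsCtx) (U : Pomset A) : C.ins U = C.bind (starSubst U) := by
  obtain ⟨c, rfl⟩ := C.exists_toPomset_eq
  obtain ⟨u, rfl⟩ := U.exists_toPomset_eq
  obtain ⟨s, hs, huniq⟩ := isCtx_toPomset_iff.1 hC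
  refine (toPomset_eq_bind_iff (u := c.insL u)).2 ⟨Sum.elim Subtype.val fun _ => s, ?_, fun i => ?_⟩
  · rintro (x | x) (y | y) h
    · exact Iff.rfl
    · exact ⟨fun ⟨_, t, ht, hle⟩ => huniq t ht ▸ hle, fun hle => ⟨hC, s, hs, hle⟩⟩
    · exact ⟨fun ⟨_, t, ht, hle⟩ => huniq t ht ▸ hle, fun hle => ⟨hC, s, hs, hle⟩⟩
    · exact (h rfl).elim
  · cases hi : c.lab i with
    | none =>
      obtain rfl := huniq i hi
      refine toPomset_restrict_eq Sum.inr (fun _ _ => Iff.rfl) (fun _ => rfl) (Set.ext ?_)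
      rintro (x | x)
      · exact iff_of_false (fun ⟨_, h⟩ => Sum.inr_ne_inl h)
          fun hx => x.2 ((congrArg c.lab hx).trans hi)
      · exact iff_of_true ⟨x, rfl⟩ rfl
    | some a =>
      have hi' : c.lab i ≠ none := by simp [hi]
      refine toPomset_eq_single_iff.2 ⟨⟨Sum.inl ⟨i, hi'⟩, rfl⟩, ?_, Option.get_of_eq_some _ hi⟩
      rintro ⟨x | x, hx⟩
      · exact Subtype.ext (congrArg Sum.inl (Subtype.ext hx))
      · exact (hi' ((congrArg c.lab (hx : s = i)).symm.trans hs)).elim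

theorem map_some_bind_starSubst (U V : Pomset A) : (V.map some).bind (starSubst U) = V := by
  obtain ⟨v, rfl⟩ := V.exists_toPomset_eq
  refine (toPomset_eq_bind_iff (c := v.mapL some) (u := v) |>.2
    ⟨id, fun _ _ _ => Iff.rfl, fun i => ?_⟩).symm
  exact toPomset_eq_single_iff.2 ⟨⟨i, rfl⟩, fun y => Subtype.ext y.2, rfl⟩

theorem IsCtx.par_map_some (hC : C.IsCtx) (V : Pomset A) : (C.par (V.map some)).IsCtx := by
  obtain ⟨c, rfl⟩ := C.exists_toPomset_eq
  obtain ⟨v, rfl⟩ := V.exists_toPomset_eq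
  obtain ⟨s, hs, huniq⟩ := isCtx_toPomset_iff.1 hC
  refine (isCtx_toPomset_iff (c := c.parL (v.mapL some))).2 ⟨Sum.inl s, hs, ?_⟩
  rintro (x | x) hx
  · exact congrArg Sum.inl (huniq x hx)
  · exact (Option.some_ne_none _ hx).elim

theorem exists_toPomset_eq_map_some {c : LPoset (Option A)} (hc : ∀ x, c.lab x ≠ none) :
    ∃ V : Pomset A, c.toPomset = V.map some :=
  ⟨LPoset.toPomset { carrier := c.carrier
                     lab x := (c.lab x).get (Option.isSome_iff_ne_none.2 (hc x)) },
    congrArg (fun l => LPoset.toPomset { carrier := c.carrier, lab := l })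
      (funext fun _ => (Option.some_get _).symm)⟩

theorem IsCtx.of_par (h : (C.par D).IsCtx) :
    (C.IsCtx ∧ ∃ V : Pomset A, D = V.map some) ∨ (D.IsCtx ∧ ∃ U : Pomset A, C = U.map some) := by
  obtain ⟨c, rfl⟩ := C.exists_toPomset_eq
  obtain ⟨d, rfl⟩ := D.exists_toPomset_eq
  obtain ⟨s | s, hs, huniq⟩ := (isCtx_toPomset_iff (c := c.parL d)).1 h
  · exact Or.inl ⟨⟨s, hs, fun x hx => Sum.inl_injective (huniq (Sum.inl x) hx)⟩,
      exists_toPomset_eq_map_some fun x hx => Sum.inr_ne_inl (huniq (Sum.inr x) hx)⟩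
  · exact Or.inr ⟨⟨s, hs, fun x hx => Sum.inr_injective (huniq (Sum.inr x) hx)⟩,
      exists_toPomset_eq_map_some fun x hx => Sum.inl_ne_inr (huniq (Sum.inl x) hx)⟩

theorem IsCtx.par_map_some_ins (hC : C.IsCtx) (U V : Pomset A) :
    (C.par (V.map some)).ins U = (C.ins U).par V := by
  rw [(hC.par_map_some V).ins_eq_bind, hC.ins_eq_bind, par_bind, map_some_bind_starSubst]

theorem IsSPCtx.par_map_some (hC : C.IsSPCtx) (hV : V.IsSP) : (C.par (V.map some)).IsSPCtx :=
  ⟨hC.1.par_map_some V, hC.2.par (hV.map some)⟩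

theorem IsSeqCtx.isSPCtx (hC : C.IsSeqCtx) : C.IsSPCtx := ⟨hC.1, hC.2.isSP⟩

theorem IsSPCtx.isSP_ins (hC : C.IsSPCtx) (hU : U.IsSP) : (C.ins U).IsSP :=
  hC.1.ins_eq_bind U ▸ hC.2.bind (forall_starSubst .single hU)

theorem IsSeqCtx.isWord_ins (hC : C.IsSeqCtx) (hU : U.IsWord) : (C.ins U).IsWord :=
  hC.1.ins_eq_bind U ▸ hC.2.bind (forall_starSubst isWord_single hU)

theorem IsCtx.isSeqCtx_of_isWord_ins (hC : C.IsCtx) (h : (C.ins W).IsWord)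
    (hW : W ≠ Pomset.empty A) : C.IsSeqCtx :=
  ⟨hC, (hC.ins_eq_bind W ▸ h).of_bind
    (forall_starSubst (P := (· ≠ Pomset.empty A)) single_ne_empty hW)⟩

theorem IsSPCtx.exists_of_ins_eq_par (hC : C.IsSPCtx) (hW : W.IsParIrreducible)
    (h : C.ins W = U.par V) :
    ∃ D : Pomset (Option A), D.IsSPCtx ∧
      ((D.ins W = U ∧ ∀ T, C.ins T = (D.ins T).par V) ∨
        (D.ins W = V ∧ ∀ T, C.ins T = U.par (D.ins T))) := by
  have hirr : ∀ o, (starSubst W o).IsParIrreducible := forall_starSubst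
    (fun a => (isWord_single a).isParIrreducible (single_ne_empty a)) hW
  rw [hC.1.ins_eq_bind] at h
  obtain ⟨C₁, C₂, rfl, rfl, rfl⟩ := exists_par_of_bind_eq_par hirr h
  obtain ⟨hSP₁, hSP₂⟩ := isSP_par_iff.1 hC.2
  rcases hC.1.of_par with ⟨hC₁, V, rfl⟩ | ⟨hC₂, U, rfl⟩
  · refine ⟨C₁, ⟨hC₁, hSP₁⟩, Or.inl ⟨hC₁.ins_eq_bind W, fun T => ?_⟩⟩
    rw [map_some_bind_starSubst, hC₁.par_map_some_ins]
  · refine ⟨C₂, ⟨hC₂, hSP₂⟩, Or.inr ⟨hC₂.ins_eq_bind W, fun T => ?_⟩⟩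
    rw [map_some_bind_starSubst, par_comm, hC₂.par_map_some_ins, par_comm]

end Pomset

section Closure

variable {A : Type} {H : HypSet A} {L K : Lang A} {U V : Pomset A}

theorem subset_cl (H : HypSet A) (L : Lang A) : L ⊆ cl H L := fun _ => closure.base

theorem cl_subset_cl (h : L ⊆ cl H K) : cl H L ⊆ cl H K := by
  intro U hU
  induction hU with
  | base hU => exact h hU
  | step hef hC _ hU ih => exact closure.step hef hC ih hU

theorem cl_subset_SPset (hL : L ⊆ SPset A) : cl H L ⊆ SPset A := by
  intro U hU
  induction hU with
  | base hU => exact hL hU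
  | @step e _ _ C hC _ U hU _ => exact hC.isSP_ins (e.lang_subset_SPset hU)

theorem seqCl_subset_cl (H : HypSet A) (L : Lang A) : seqCl H L ⊆ cl H L := by
  intro U hU
  induction hU with
  | base hU => exact closure.base hU
  | step hef hC _ hU ih => exact closure.step hef hC.isSPCtx ih hU

theorem isWord_of_mem_seqCl (hH : ∀ p ∈ H, ∀ U ∈ p.1.lang, U.IsWord) (hL : ∀ U ∈ L, U.IsWord)
    (hU : U ∈ seqCl H L) : U.IsWord := by
  cases hU with
  | base hU => exact hL _ hU
  | step hef hC _ hU => exact hC.isWord_ins (hH _ hef _ hU)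

theorem cl_eq_seqCl
    (hH : ∀ p ∈ H, (∀ U ∈ p.1.lang, U.IsWord) ∧ ∃ W ∈ p.2.lang, W ≠ Pomset.empty A)
    (hL : ∀ U ∈ L, U.IsWord) : cl H L = seqCl H L := by
  refine Set.Subset.antisymm (fun U hU => ?_) (seqCl_subset_cl H L)
  induction hU with
  | base hU => exact seqClosure.base hU
  | step hef hC _ hU ih =>
    obtain ⟨W, hW, hne⟩ := (hH _ hef).2
    have hins := isWord_of_mem_seqCl (fun p hp => (hH p hp).1) hL (ih W hW)
    exact seqClosure.step hef (hC.1.isSeqCtx_of_isWord_ins hins hne) ih hU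

theorem par_mem_cl (hU : U ∈ cl H L) (hV : V.IsSP) : U.par V ∈ cl H (L.par {V}) := by
  induction hU with
  | @base U hU => exact closure.base ⟨U, hU, V, rfl, rfl⟩
  | step hef hC _ hU ih =>
    rw [← hC.1.par_map_some_ins]
    exact closure.step hef (hC.par_map_some hV)
      (fun W hW => (hC.1.par_map_some_ins W V).symm ▸ ih W hW) hU

theorem par_cl_subset (hL : L ⊆ SPset A) (hK : K ⊆ SPset A) :
    (cl H L).par (cl H K) ⊆ cl H (L.par K) := by
  rintro _ ⟨U, hU, V, hV, rfl⟩
  refine cl_subset_cl ?_ (par_mem_cl hU (cl_subset_SPset hK hV))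
  rintro _ ⟨U, hU, _, rfl, rfl⟩
  rw [Pomset.par_comm]
  refine cl_subset_cl ?_ (par_mem_cl hV (hL hU))
  rintro _ ⟨V, hV, _, rfl, rfl⟩
  exact closure.base ⟨_, hU, V, hV, Pomset.par_comm _ _⟩

theorem cl_par_subset (hH : ∀ p ∈ H, ∃ W : Pomset A, W.IsParIrreducible ∧ p.2.lang = {W})
    (L K : Lang A) : cl H (L.par K) ⊆ (cl H L).par (cl H K) := by
  intro U hU
  induction hU with
  | base hU =>
    obtain ⟨U, hU, V, hV, rfl⟩ := hU
    exact ⟨U, subset_cl H L hU, V, subset_cl H K hV, rfl⟩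
  | @step e f hef C hC _ T hT ih =>
    obtain ⟨W, hW, hf⟩ : ∃ W : Pomset A, W.IsParIrreducible ∧ f.lang = {W} := hH _ hef
    obtain ⟨U, hU, V, hV, hUV⟩ := ih W (hf.superset rfl)
    have ins_mem_cl : ∀ {D : Pomset (Option A)} {M : Lang A}, D.IsSPCtx → D.ins W ∈ cl H M →
        D.ins T ∈ cl H M := fun hD hmem =>
      closure.step hef hD (fun W' hW' => (hf.subset hW' : W' = W) ▸ hmem) hT
    obtain ⟨D, hD, ⟨rfl, hins⟩ | ⟨rfl, hins⟩⟩ := hC.exists_of_ins_eq_par hW hUV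
    · exact ⟨D.ins T, ins_mem_cl hD hU, V, hV, hins T⟩
    · exact ⟨U, hU, D.ins T, ins_mem_cl hD hV, hins T⟩

theorem cl_par (hH : ∀ p ∈ H, ∃ W : Pomset A, W.IsParIrreducible ∧ p.2.lang = {W})
    (hL : L ⊆ SPset A) (hK : K ⊆ SPset A) : cl H (L.par K) = (cl H L).par (cl H K) :=
  (cl_par_subset hH L K).antisymm (par_cl_subset hL hK)

theorem grounded_closure_general (H : HypSet A)
    (hH : ∀ p ∈ H, (∀ U ∈ p.1.lang, U.IsWord) ∧
      ∃ W : Pomset A, W.IsParIrreducible ∧ p.2.lang = {W}) :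
    (∀ L : Lang A, (∀ U ∈ L, U.IsWord) → cl H L = seqCl H L) ∧
    (∀ L L' : Lang A, L ⊆ SPset A → L' ⊆ SPset A →
      cl H (Lang.par L L') = Lang.par (cl H L) (cl H L')) :=
  ⟨fun _ => cl_eq_seqCl fun p hp =>
      ⟨(hH p hp).1, (hH p hp).2.imp fun _ ⟨hW, h⟩ => ⟨h.superset rfl, hW.1⟩⟩,
    fun _ _ => cl_par fun p hp => (hH p hp).2⟩

end Closure

/-- **Closure of word languages under grounded hypotheses**: (i) on word languages,
closure and sequential closure agree; (ii) closure commutes with `∥` on SP languages. -/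
theorem grounded_closure (A : Type) (H : HypSet A) (hH : Grounded H) :
    (∀ L : Lang A, (∀ U ∈ L, U.IsWord) → cl H L = seqCl H L) ∧
    (∀ L L' : Lang A, L ⊆ SPset A → L' ⊆ SPset A →
      cl H (Lang.par L L') = Lang.par (cl H L) (cl H L')) :=
  grounded_closure_general H fun p hp => ⟨(hH p hp).1.isWord,
    (hH p hp).2.imp fun _ ⟨hW, h⟩ => ⟨hW.1.isParIrreducible hW.2, h⟩⟩

end CKAH
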